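/- arXiv:2403.15251 — 5 statements merged into one kernel-verified Lean document; each statement's English description precedes it below -/
import Mathlib

section
/- The true antecedent survives Rules 2 and 4: let M* satisfy the no-disjunctive-antecedents and bounded-antecedents assumptions and let every transition in the finite set T be generated by M*. Then for every action a occurring in some transition of T, every effect (c*, e) ∈ eff_{M*}(a) and every literal l ∈ e, the reduced antecedent c* ∖ pre_T(a) belongs to PosAnte_T(l, a), and hence to PA_T(l, a). -/
/-!
A literal of `preT T a` holds in the pre-state of every transition of `T` with action `a`, so on
those transitions the reduced antecedent holds exactly when the true antecedent does
(`finsetDiffSet_preT_subset_iff`). For the true antecedent, if it holds then its effect fires and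
`l` is in the post-state. Conversely, if `l` is newly produced then some effect with result `l`
fired, and since at most one effect has `l` as a result, it was this one.
-/

/-- A literal: a fluent together with a Boolean polarity. -/
abbrev Lit (F : Type) := F × Bool

/-- The negation of a literal: same fluent, opposite polarity. -/
def Lit.neg {F : Type} (l : Lit F) : Lit F := (l.1, !l.2)

/-- A set of literals is a state if, for each fluent, it contains exactly one of
its two literals. -/
def IsState {F : Type} (s : Set (Lit F)) : Prop :=
  ∀ f : F, Xor' ((f, true) ∈ s) ((f, false) ∈ s)

/-- An action model: preconditions and (conditional) effects for every action.
An effect is a pair `(c, e)` of finite sets of literals (antecedent, result). -/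
structure ActionModel (F A : Type) where
  pre : A → Set (Lit F)
  eff : A → Finset (Finset (Lit F) × Finset (Lit F))

/-- `a` is applicable in `s` according to `M`. -/
def ActionModel.applicable {F A : Type} (M : ActionModel F A) (a : A)
    (s : Set (Lit F)) : Prop :=
  M.pre a ⊆ s

/-- The successor set `a_M(s)`. -/
def ActionModel.succ {F A : Type} (M : ActionModel F A) (a : A)
    (s : Set (Lit F)) : Set (Lit F) :=
  {l | (∃ ce ∈ M.eff a, (ce.1 : Set (Lit F)) ⊆ s ∧ l ∈ ce.2) ∨
       (l ∈ s ∧ ¬ ∃ ce ∈ M.eff a, (ce.1 : Set (Lit F)) ⊆ s ∧ l.neg ∈ ce.2)}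

/-- A transition `(s, a, s')`. -/
structure Transition (F A : Type) where
  s : Set (Lit F)
  a : A
  s' : Set (Lit F)

/-- The transition `(s, a, s')` is generated by `M`: `s` and `s'` are states,
`a` is applicable in `s` according to `M`, and `s' = a_M(s)`. -/
def Generates {F A : Type} (M : ActionModel F A) (t : Transition F A) : Prop :=
  IsState t.s ∧ IsState t.s' ∧ M.pre t.a ⊆ t.s ∧ t.s' = M.succ t.a t.s

/-- No disjunctive antecedents: for every action and literal, at most one effect
has that literal in its result. -/
def NoDisjAnte {F A : Type} (M : ActionModel F A) : Prop :=
  ∀ a : A, ∀ l : Lit F, ∀ ce₁ ∈ M.eff a, ∀ ce₂ ∈ M.eff a,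
    l ∈ ce₁.2 → l ∈ ce₂.2 → ce₁ = ce₂

/-- Bounded antecedents: every antecedent has at most `n` literals. -/
def BoundedAnte {F A : Type} (n : ℕ) (M : ActionModel F A) : Prop :=
  ∀ a : A, ∀ ce ∈ M.eff a, ce.1.card ≤ n

/-- `pre_T(a)`: literals appearing in the pre-state of every transition of `T`
whose action is `a`. -/
def preT {F A : Type} (T : Set (Transition F A)) (a : A) : Set (Lit F) :=
  {l | ∀ t ∈ T, t.a = a → l ∈ t.s}

/-- `MustBeResult_T(a)`: literals observed as a result of `a` in `T`. -/
def MustBeResultT {F A : Type} (T : Set (Transition F A)) (a : A) : Set (Lit F) :=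
  {l | ∃ t ∈ T, t.a = a ∧ l ∈ t.s' ∧ l ∉ t.s}

/-- `PosAnte_T(l, a)`: conjunctions of at most `n` literals that survive the
inductive rules 2 and 4 on every transition of `T` whose action is `a`. -/
def PosAnteT {F A : Type} (T : Set (Transition F A)) (n : ℕ) (l : Lit F)
    (a : A) : Set (Finset (Lit F)) :=
  {c : Finset (Lit F) | c.card ≤ n ∧ ∀ t ∈ T, t.a = a →
      (l ∉ t.s' → ¬ ((c : Set (Lit F)) ⊆ t.s)) ∧
      (l ∈ t.s' → l ∉ t.s → (c : Set (Lit F)) ⊆ t.s)}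

/-- `PA_T(l, a)`: members of `PosAnte_T(l, a)` disjoint from `pre_T(a)`. -/
def PAT {F A : Type} (T : Set (Transition F A)) (n : ℕ) (l : Lit F)
    (a : A) : Set (Finset (Lit F)) :=
  {c ∈ PosAnteT T n l a | ∀ x ∈ c, x ∉ preT T a}

/-- Applicability of `a` in `s` according to the action model `M'` learned by
Conditional-SAM from `T` (with antecedent size bound `n`). -/
def LearnedApplicable {F A : Type} (T : Set (Transition F A)) (n : ℕ) (a : A)
    (s : Set (Lit F)) : Prop :=
  preT T a ⊆ s ∧
  ∀ l : Lit F, l ∉ preT T a →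
    ((l ∈ MustBeResultT T a →
        (∃ c₁ ∈ PAT T n l a, ∃ c₂ ∈ PAT T n l a, c₁ ≠ c₂) →
        (l ∈ s ∨ (∀ c ∈ PAT T n l a, ¬ ((c : Set (Lit F)) ⊆ s)) ∨
          (∀ c ∈ PAT T n l a, (c : Set (Lit F)) ⊆ s))) ∧
     (l ∉ MustBeResultT T a →
        (l ∈ s ∨ ∀ c ∈ PAT T n l a, ¬ ((c : Set (Lit F)) ⊆ s))))

/-- The successor set `a_{M'}(s)` according to the action model `M'` learned by
Conditional-SAM from `T`: for each `l ∈ MustBeResult_T(a)` there is one effect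
whose antecedent is the union of all clauses of `PA_T(l, a)` and whose result
is `{l}`. -/
def LearnedSucc {F A : Type} (T : Set (Transition F A)) (n : ℕ) (a : A)
    (s : Set (Lit F)) : Set (Lit F) :=
  {l | (l ∈ MustBeResultT T a ∧ ∀ c ∈ PAT T n l a, (c : Set (Lit F)) ⊆ s) ∨
       (l ∈ s ∧ ¬ (l.neg ∈ MustBeResultT T a ∧
          ∀ c ∈ PAT T n l.neg a, (c : Set (Lit F)) ⊆ s))}

/-- The finite set `c` with all elements of the set `P` removed. -/
noncomputable def finsetDiffSet {α : Type*} (c : Finset α) (P : Set α) :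
    Finset α :=
  letI := Classical.decPred fun x : α => x ∉ P
  c.filter fun x => x ∉ P

theorem mem_finsetDiffSet {α : Type*} {c : Finset α} {P : Set α} {x : α} :
    x ∈ finsetDiffSet c P ↔ x ∈ c ∧ x ∉ P := by
  simp [finsetDiffSet]

theorem finsetDiffSet_subset {α : Type*} (c : Finset α) (P : Set α) :
    finsetDiffSet c P ⊆ c :=
  fun _ hx => (mem_finsetDiffSet.1 hx).1

/-- On a transition with action `a`, the literals of `preT T a` hold in the pre-state
anyway, so removing them from a conjunction does not change whether it holds there. -/
theorem finsetDiffSet_preT_subset_iff {F A : Type} {T : Set (Transition F A)} {a : A}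
    {t : Transition F A} (ht : t ∈ T) (hta : t.a = a) (c : Finset (Lit F)) :
    (finsetDiffSet c (preT T a) : Set (Lit F)) ⊆ t.s ↔ (c : Set (Lit F)) ⊆ t.s := by
  constructor
  · intro h x hx
    by_cases hp : x ∈ preT T a
    · exact hp t ht hta
    · exact h (mem_finsetDiffSet.2 ⟨hx, hp⟩)
  · intro h x hx
    exact h (finsetDiffSet_subset c _ hx)

/-- **The true antecedent survives Rules 2 and 4.** Under the
no-disjunctive-antecedents and bounded-antecedents assumptions on `M*`, if
every transition in `T` is generated by `M*`, then for every action `a`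
occurring in `T`, every effect `(c*, e)` of `a` in `M*` and every literal
`l ∈ e`, the reduced antecedent `c* ∖ pre_T(a)` belongs to `PosAnte_T(l, a)`
and hence to `PA_T(l, a)`. -/
theorem true_antecedent_survives {F A : Type} (n : ℕ) (hn : 1 ≤ n)
    (Mstar : ActionModel F A)
    (hNoDisj : NoDisjAnte Mstar) (hBound : BoundedAnte n Mstar)
    (T : Set (Transition F A)) (hTfin : T.Finite)
    (hGen : ∀ t ∈ T, Generates Mstar t)
    (a : A) (ha : ∃ t ∈ T, t.a = a)
    (ce : Finset (Lit F) × Finset (Lit F)) (hce : ce ∈ Mstar.eff a)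
    (l : Lit F) (hl : l ∈ ce.2) :
    finsetDiffSet ce.1 (preT T a) ∈ PosAnteT T n l a ∧
      finsetDiffSet ce.1 (preT T a) ∈ PAT T n l a := by
  have hPos : finsetDiffSet ce.1 (preT T a) ∈ PosAnteT T n l a := by
    refine ⟨(Finset.card_le_card (finsetDiffSet_subset _ _)).trans (hBound a ce hce),
      fun t ht hta => ?_⟩
    rw [finsetDiffSet_preT_subset_iff ht hta]
    obtain ⟨-, -, -, hs'⟩ := hGen t ht
    rw [hs', hta]
    refine ⟨fun hn' hc => hn' (Or.inl ⟨ce, hce, hc, hl⟩), ?_⟩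
    rintro (⟨ce', hce', hc', hl'⟩ | ⟨hls, -⟩) hns
    -- The effect that produced `l` is the given one, as antecedents are not disjunctive.
    · rwa [hNoDisj a l ce hce ce' hce' hl hl']
    · exact absurd hls hns
  exact ⟨hPos, hPos, fun x hx => (mem_finsetDiffSet.1 hx).2⟩
end

section
/- Blocking lemma (soundness of NotAnte): let M* satisfy the no-disjunctive-antecedents and bounded-antecedents assumptions, let every transition in T be generated by M*, and let a be an action occurring in some transition of T. Then for every state s with pre_T(a) ⊆ s and every literal l such that every c ∈ PA_T(l,a) satisfies c ⊄ s: every effect (c*, e) ∈ eff_{M*}(a) with l ∈ e satisfies c* ⊄ s (its antecedent does not hold in s); consequently l ∈ a_{M*}(s) implies l ∈ s. -/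
/-- **Blocking lemma (soundness of NotAnte).** Under the
no-disjunctive-antecedents and bounded-antecedents assumptions on `M*`, if
every transition in `T` is generated by `M*` and `a` occurs in `T`, then for
every state `s` with `pre_T(a) ⊆ s` and every literal `l` such that no clause
of `PA_T(l, a)` holds in `s`: every effect of `a` in `M*` with `l` in its
result has an antecedent that does not hold in `s`; consequently
`l ∈ a_{M*}(s)` implies `l ∈ s`. -/
theorem blocking_lemma {F A : Type} (n : ℕ) (hn : 1 ≤ n)
    (Mstar : ActionModel F A)
    (hNoDisj : NoDisjAnte Mstar) (hBound : BoundedAnte n Mstar)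
    (T : Set (Transition F A)) (hTfin : T.Finite)
    (hGen : ∀ t ∈ T, Generates Mstar t)
    (a : A) (ha : ∃ t ∈ T, t.a = a)
    (s : Set (Lit F)) (hs : IsState s) (hpre : preT T a ⊆ s)
    (l : Lit F)
    (hblock : ∀ c ∈ PAT T n l a, ¬ ((c : Set (Lit F)) ⊆ s)) :
    (∀ ce ∈ Mstar.eff a, l ∈ ce.2 → ¬ ((ce.1 : Set (Lit F)) ⊆ s)) ∧
      (l ∈ Mstar.succ a s → l ∈ s) := by
  have key : ∀ ce ∈ Mstar.eff a, l ∈ ce.2 → ¬ ((ce.1 : Set (Lit F)) ⊆ s) := by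
    classical
    intro ce hce hl hsub
    refine hblock (ce.1.filter (· ∉ preT T a))
      ⟨⟨(Finset.card_filter_le _ _).trans (hBound a ce hce), ?_⟩,
        fun x hx => (Finset.mem_filter.mp hx).2⟩
      fun x hx => hsub (Finset.mem_filter.mp hx).1
    rintro t ht rfl
    obtain ⟨-, -, -, hsucc⟩ := hGen t ht
    refine ⟨fun hl' hc => hl' ?_, fun hl' hls x hx => ?_⟩
    · rw [hsucc]
      refine Or.inl ⟨ce, hce, fun x hx => ?_, hl⟩
      by_cases hxp : x ∈ preT T t.a
      · exact hxp t ht rfl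
      · exact hc (Finset.mem_filter.mpr ⟨hx, hxp⟩)
    · rw [hsucc] at hl'
      rcases hl' with ⟨ce', hce', hfire, hl''⟩ | ⟨h, -⟩
      -- `l` was newly produced, so its only possible cause `ce` must have fired.
      · rw [hNoDisj t.a l ce hce ce' hce' hl hl''] at hx
        exact hfire (Finset.mem_filter.mp hx).1
      · exact absurd h hls
  refine ⟨key, ?_⟩
  rintro (⟨ce, hce, hsub, hl⟩ | ⟨h, -⟩)
  · exact absurd hsub (key ce hce hl)
  · exact h
end

section
/- Triggering lemma (soundness of Ante): let M* satisfy the no-disjunctive-antecedents and bounded-antecedents assumptions, let every transition in T be generated by M*, and let a be an action occurring in some transition of T. Then for every state s with pre_T(a) ⊆ s and every literal l that is the result of some effect (c*, e) ∈ eff_{M*}(a) (i.e., l ∈ e), if every c ∈ PA_T(l,a) satisfies c ⊆ s, then c* ⊆ s, and hence l ∈ a_{M*}(s) provided no effect of a in M* whose antecedent holds in s has ¬l in its result. -/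
open Classical in
/-- In a set of literals containing `P`, a conjunction holds as soon as its part outside `P` does. -/
lemma subset_of_filter_notMem_subset {F : Type} {c : Finset (Lit F)} {P s : Set (Lit F)}
    (hP : P ⊆ s) (h : ((c.filter (· ∉ P) : Finset (Lit F)) : Set (Lit F)) ⊆ s) :
    (c : Set (Lit F)) ⊆ s := by
  intro x hx
  by_cases hxP : x ∈ P
  · exact hP hxP
  · exact h (Finset.mem_coe.2 (Finset.mem_filter.2 ⟨hx, hxP⟩))

open Classical in
/-- The true antecedent of `l`, with the literals of `pre_T(a)` removed, survives learning. -/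
lemma filter_antecedent_mem_PAT {F A : Type} {n : ℕ} {M : ActionModel F A}
    (hNoDisj : NoDisjAnte M) (hBound : BoundedAnte n M)
    {T : Set (Transition F A)} (hGen : ∀ t ∈ T, Generates M t) {a : A} {l : Lit F}
    {ce : Finset (Lit F) × Finset (Lit F)} (hce : ce ∈ M.eff a) (hl : l ∈ ce.2) :
    ce.1.filter (· ∉ preT T a) ∈ PAT T n l a := by
  refine ⟨⟨(Finset.card_filter_le _ _).trans (hBound a ce hce), ?_⟩,
    fun x hx => (Finset.mem_filter.1 hx).2⟩
  rintro t ht rfl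
  obtain ⟨-, -, -, hsucc⟩ := hGen t ht
  refine ⟨fun hl' hc => hl' ?_, fun hl' hls => ?_⟩
  · rw [hsucc]
    exact Or.inl
      ⟨ce, hce, subset_of_filter_notMem_subset (P := preT T t.a) (fun x hx => hx t ht rfl) hc, hl⟩
  · rw [hsucc] at hl'
    obtain ⟨ce', hce', hsub, hlce'⟩ | ⟨h, -⟩ := hl'
    · obtain rfl := hNoDisj _ l ce' hce' ce hce hlce' hl
      exact fun x hx => hsub (Finset.mem_filter.1 hx).1
    · exact absurd h hls

/-- **Triggering lemma (soundness of Ante).** Under the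
no-disjunctive-antecedents and bounded-antecedents assumptions on `M*`, if
every transition in `T` is generated by `M*` and `a` occurs in `T`, then for
every state `s` with `pre_T(a) ⊆ s` and every literal `l` that is the result
of some effect `(c*, e)` of `a` in `M*`, if every clause of `PA_T(l, a)` holds
in `s` then `c* ⊆ s`, and hence `l ∈ a_{M*}(s)` provided no effect of `a` in
`M*` whose antecedent holds in `s` has `¬l` in its result. -/
theorem triggering_lemma {F A : Type} (n : ℕ) (hn : 1 ≤ n)
    (Mstar : ActionModel F A)
    (hNoDisj : NoDisjAnte Mstar) (hBound : BoundedAnte n Mstar)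
    (T : Set (Transition F A)) (hTfin : T.Finite)
    (hGen : ∀ t ∈ T, Generates Mstar t)
    (a : A) (ha : ∃ t ∈ T, t.a = a)
    (s : Set (Lit F)) (hs : IsState s) (hpre : preT T a ⊆ s)
    (l : Lit F)
    (ce : Finset (Lit F) × Finset (Lit F)) (hce : ce ∈ Mstar.eff a)
    (hl : l ∈ ce.2)
    (htrig : ∀ c ∈ PAT T n l a, (c : Set (Lit F)) ⊆ s) :
    (ce.1 : Set (Lit F)) ⊆ s ∧
      ((∀ ce' ∈ Mstar.eff a, (ce'.1 : Set (Lit F)) ⊆ s → l.neg ∉ ce'.2) →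
        l ∈ Mstar.succ a s) := by
  have hsub : (ce.1 : Set (Lit F)) ⊆ s :=
    subset_of_filter_notMem_subset hpre
      (htrig _ (filter_antecedent_mem_PAT hNoDisj hBound hGen hce hl))
  exact ⟨hsub, fun _ => Or.inl ⟨ce, hce, hsub, hl⟩⟩
end

section
/- Observational completeness of the learned model (used in the proof of Theorem 4): for every finite set T of transitions and every transition (s,a,s') ∈ T, the action a is applicable in s according to the action model M' learned by Conditional-SAM from T. No assumption on how the transitions in T were generated is needed. -/
/-- **Observational completeness of the learned model.** For every finite set
`T` of transitions and every transition `(s, a, s') ∈ T`, the action `a` is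
applicable in `s` according to the action model learned by Conditional-SAM
from `T`; no assumption on how the transitions were generated is needed. -/
theorem observational_completeness {F A : Type} (n : ℕ) (hn : 1 ≤ n)
    (T : Set (Transition F A)) (hTfin : T.Finite)
    (t : Transition F A) (ht : t ∈ T) :
    LearnedApplicable T n t.a t.s := by
  refine ⟨fun l hl => hl t ht rfl, fun l _ => ⟨fun _ _ => ?_, fun hl => ?_⟩⟩
  · by_cases h : l ∈ t.s
    · exact Or.inl h
    · by_cases h' : l ∈ t.s'
      -- `t` itself shows `l` being added, so every surviving antecedent held before.
      · exact Or.inr (Or.inr fun c hc => (hc.1.2 t ht rfl).2 h' h)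
      · exact Or.inr (Or.inl fun c hc => (hc.1.2 t ht rfl).1 h')
  · by_cases h : l ∈ t.s
    · exact Or.inl h
    · exact Or.inr fun c hc => (hc.1.2 t ht rfl).1 fun h' => hl ⟨t, ht, rfl, h', h⟩
end

section
/- Union bound over a finite hypothesis class (core of Theorem 4): let μ be a probability measure on a measurable space X, let H be a finite set, and for each h ∈ H let E_h ⊆ X be a measurable set. Let ε, δ ∈ (0,1) and let m be a natural number. Then the probability under the m-fold product measure μ^{⊗m} of the event {x : there exists h ∈ H with μ(E_h) ≥ ε such that for all i, x i ∉ E_h} is at most |H|·(1 − ε)^m. In particular, if m ≥ (ln|H| + ln(1/δ))/ε, then this probability is at most δ. -/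
/-!
For a fixed `h`, independence of the coordinates gives that all `m` samples miss `E h` with
probability `(1 - μ (E h)) ^ m`, which is at most `(1 - ε) ^ m` when `μ (E h) ≥ ε`. Summing over the
at most `|H|` such `h` gives the first bound. The second follows from it and `1 - ε ≤ exp (-ε)`:
the hypothesis on `m` says exactly that `|H| * exp (-ε * m) ≤ δ` (for nonempty `H`).
-/

open MeasureTheory

/-- All `m` i.i.d. samples miss a set of measure at least `ε` with probability at most
`(1 - ε) ^ m`, since the product measure of a box is the product of the measures of its sides. -/
theorem measureReal_pi_compl_le {X : Type*} [MeasurableSpace X]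
    (μ : Measure X) [IsProbabilityMeasure μ] {A : Set X} (hA : MeasurableSet A)
    {ε : ℝ} (h : ε ≤ μ.real A) (m : ℕ) :
    (Measure.pi fun _ : Fin m => μ).real (Set.univ.pi fun _ => Aᶜ) ≤ (1 - ε) ^ m := by
  have heq : (Measure.pi fun _ : Fin m => μ).real (Set.univ.pi fun _ => Aᶜ)
      = (1 - μ.real A) ^ m := by
    rw [← probReal_compl_eq_one_sub hA]
    simp [Measure.real, Measure.pi_pi]
  rw [heq]
  have h1 : μ.real A ≤ 1 := measureReal_le_one
  exact pow_le_pow_left₀ (by linarith) (by linarith) m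

/-- The sample size `(ln n + ln (1 / δ)) / ε` suffices to bring `n * (1 - ε) ^ m` below `δ`. -/
theorem card_mul_one_sub_pow_le (n m : ℕ) {ε δ : ℝ} (hε0 : 0 < ε) (hε1 : ε < 1) (hδ : 0 < δ)
    (hm : (Real.log n + Real.log (1 / δ)) / ε ≤ m) :
    (n : ℝ) * (1 - ε) ^ m ≤ δ := by
  -- `Real.log 0 = 0`, so the hypothesis on `m` carries no information when `n = 0`.
  rcases Nat.eq_zero_or_pos n with rfl | hn
  · simpa using hδ.le
  have hn' : (0 : ℝ) < n := by exact_mod_cast hn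
  rw [div_le_iff₀ hε0, one_div, Real.log_inv] at hm
  have hexp : 1 - ε ≤ Real.exp (-ε) := Real.one_sub_le_exp_neg ε
  calc (n : ℝ) * (1 - ε) ^ m ≤ n * Real.exp (-ε) ^ m := by
        gcongr
    _ = Real.exp (Real.log n + m * -ε) := by
        rw [Real.exp_add, Real.exp_log hn', Real.exp_nat_mul]
    _ ≤ Real.exp (Real.log δ) := Real.exp_le_exp.2 (by linarith)
    _ = δ := Real.exp_log hδ

/-- **Union bound over a finite hypothesis class.** For a probability measure
`μ`, a finite hypothesis class `H` with a measurable event `E h` for each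
`h ∈ H`, and `ε, δ ∈ (0,1)`, the probability under the `m`-fold product
measure that some hypothesis `h ∈ H` with `μ(E h) ≥ ε` is missed by all `m`
i.i.d. samples is at most `|H|·(1 − ε)^m`; in particular, if
`m ≥ (ln|H| + ln(1/δ))/ε`, then this probability is at most `δ`. -/
theorem union_bound_finite_class {X : Type*} [MeasurableSpace X]
    (μ : Measure X) [IsProbabilityMeasure μ]
    {ι : Type*} (H : Finset ι) (E : ι → Set X)
    (hE : ∀ h ∈ H, MeasurableSet (E h))
    (ε δ : ℝ) (hε : ε ∈ Set.Ioo (0 : ℝ) 1) (hδ : δ ∈ Set.Ioo (0 : ℝ) 1)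
    (m : ℕ) :
    ((Measure.pi fun _ : Fin m => μ)
          {x | ∃ h ∈ H, ε ≤ (μ (E h)).toReal ∧ ∀ i, x i ∉ E h}).toReal
        ≤ (H.card : ℝ) * (1 - ε) ^ m ∧
      ((Real.log H.card + Real.log (1 / δ)) / ε ≤ (m : ℝ) →
        ((Measure.pi fun _ : Fin m => μ)
            {x | ∃ h ∈ H, ε ≤ (μ (E h)).toReal ∧ ∀ i, x i ∉ E h}).toReal
          ≤ δ) := by
  have hfirst : ((Measure.pi fun _ : Fin m => μ)
          {x | ∃ h ∈ H, ε ≤ (μ (E h)).toReal ∧ ∀ i, x i ∉ E h}).toReal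
        ≤ (H.card : ℝ) * (1 - ε) ^ m := by
    classical
    set P := Measure.pi fun _ : Fin m => μ with hP
    have hset : {x : Fin m → X | ∃ h ∈ H, ε ≤ (μ (E h)).toReal ∧ ∀ i, x i ∉ E h}
        = ⋃ h ∈ H.filter (fun h => ε ≤ (μ (E h)).toReal), Set.univ.pi fun _ => (E h)ᶜ := by
      ext x
      simp [and_assoc]
    rw [hset]
    calc P.real (⋃ h ∈ H.filter (fun h => ε ≤ (μ (E h)).toReal), Set.univ.pi fun _ => (E h)ᶜ)
        ≤ ∑ h ∈ H.filter (fun h => ε ≤ (μ (E h)).toReal),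
            P.real (Set.univ.pi fun _ => (E h)ᶜ) := measureReal_biUnion_finset_le _ _
      _ ≤ ∑ _h ∈ H.filter (fun h => ε ≤ (μ (E h)).toReal), (1 - ε) ^ m := by
          refine Finset.sum_le_sum fun h hh => ?_
          rw [Finset.mem_filter] at hh
          exact measureReal_pi_compl_le μ (hE h hh.1) hh.2 m
      _ ≤ (H.card : ℝ) * (1 - ε) ^ m := by
          rw [Finset.sum_const, nsmul_eq_mul]
          have hε1 : 0 ≤ 1 - ε := by linarith [hε.2]
          gcongr
          exact Finset.filter_subset _ _
  exact ⟨hfirst, fun hm =>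
    hfirst.trans (card_mul_one_sub_pow_le H.card m hε.1 hε.2 hδ.1 hm)⟩
end
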